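/- Threshold corollary (superposition security of 2τ-private secret sharing, underlying the zero-knowledge simulation): Let n, k, τ ∈ ℕ, let 𝕊 be a type of secrets, R a finite type of randomness, and p : R → ℝ with p(r) ≥ 0 for all r. For each party i ∈ Fin n let v_i : 𝕊 → R → {0,1}^k be its share, and define padded joint views w_A(s, r) as before. Assume the scheme is perfectly 2τ-private: for every subset B ⊆ Fin n with |B| ≤ 2τ, all s, s' ∈ 𝕊, and every u : Fin n → {0,1}^k, Σ_{r : ∀ i ∈ B, v_i(s, r) = u(i)} p(r) = Σ_{r : ∀ i ∈ B, v_i(s', r) = u(i)} p(r). Let F = {A ⊆ Fin n : |A| ≤ τ}. Then for any finite environment type X, any amplitudes α : X × Finset(Fin n) × (Fin n → {0,1}^k) → ℂ, and the adversary states ρ_s = Σ_r p(r) ψ_s(r) ψ_s(r)^* with ψ_s(r) = Σ_{x, A ∈ F, a} α(x, A, a) e_{(x, A, a ⊕ w_A(s,r))}, one has ρ_s = ρ_{s'} for all s, s' ∈ 𝕊. In words: a perfectly 2τ-private secret sharing scheme remains perfectly secure even when the adversary queries subsets of at most τ shares in superposition. -/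

import Mathlib

open scoped BigOperators

/-- The padded joint view of the parties in `A`: party `i`'s share if `i ∈ A`,
and the all-zero string otherwise. -/
def paddedView (n k : ℕ) {𝕊 R : Type*}
    (v : Fin n → 𝕊 → R → (Fin k → ZMod 2))
    (A : Finset (Fin n)) (s : 𝕊) (r : R) : Fin n → (Fin k → ZMod 2) :=
  fun i => if i ∈ A then v i s r else 0

/-- The state `ψ_s(r)` obtained from the adversary's superposition query:
`∑_{x, A ∈ F, a} α(x, A, a) · e_{(x, A, a ⊕ w_A(s,r))}`. -/
noncomputable def advQueryState (n k : ℕ) {𝕊 R X : Type*} [DecidableEq X]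
    (v : Fin n → 𝕊 → R → (Fin k → ZMod 2)) (F : Finset (Finset (Fin n)))
    (α : X × Finset (Fin n) × (Fin n → Fin k → ZMod 2) → ℂ)
    (s : 𝕊) (r : R) [Fintype X] :
    X × Finset (Fin n) × (Fin n → Fin k → ZMod 2) → ℂ :=
  ∑ x : X, ∑ A ∈ F, ∑ a : Fin n → Fin k → ZMod 2,
    α (x, A, a) •
      (Pi.single (x, A, a + paddedView n k v A s r) 1 :
        X × Finset (Fin n) × (Fin n → Fin k → ZMod 2) → ℂ)

/-- Entries of the query state: the query permutes the basis within each `(x, A)` block. -/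
theorem advQueryState_apply (n k : ℕ) {𝕊 R X : Type*} [DecidableEq X] [Fintype X]
    (v : Fin n → 𝕊 → R → (Fin k → ZMod 2)) (F : Finset (Finset (Fin n)))
    (α : X × Finset (Fin n) × (Fin n → Fin k → ZMod 2) → ℂ) (s : 𝕊) (r : R)
    (x : X) (A : Finset (Fin n)) (b : Fin n → Fin k → ZMod 2) :
    advQueryState n k v F α s r (x, A, b)
      = if A ∈ F then α (x, A, b - paddedView n k v A s r) else 0 := by
  have key : ∀ (y : X) (C : Finset (Fin n)) (a : Fin n → Fin k → ZMod 2),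
      (α (y, C, a) • (Pi.single (y, C, a + paddedView n k v C s r) 1 :
        X × Finset (Fin n) × (Fin n → Fin k → ZMod 2) → ℂ)) (x, A, b)
      = if x = y then if A = C then
          if b - paddedView n k v A s r = a then α (y, C, a) else 0 else 0 else 0 := by
    intro y C a
    by_cases hx : x = y
    · by_cases hA : A = C
      · subst hx hA
        simp [Pi.single_apply, sub_eq_iff_eq_add]
      · simp [hA]
    · simp [hx]
  simp only [advQueryState, Finset.sum_apply, key]
  simp

theorem paddedView_eq_iff (n k : ℕ) {𝕊 R : Type*} (v : Fin n → 𝕊 → R → (Fin k → ZMod 2))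
    (B : Finset (Fin n)) (s : 𝕊) (r : R) (u : Fin n → Fin k → ZMod 2) :
    paddedView n k v B s r = u ↔ (∀ i ∈ B, v i s r = u i) ∧ ∀ i ∉ B, u i = 0 := by
  simp only [funext_iff (f := paddedView n k v B s r), paddedView, ← forall_and]
  refine forall_congr' fun i => ?_
  by_cases hi : i ∈ B <;> simp [hi, eq_comm]

/-- Restricting a joint view to a smaller set of parties yields their joint view. -/
theorem paddedView_of_subset (n k : ℕ) {𝕊 R : Type*} (v : Fin n → 𝕊 → R → (Fin k → ZMod 2))
    {A B : Finset (Fin n)} (h : A ⊆ B) (s : 𝕊) (r : R) :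
    paddedView n k v A s r = fun i => if i ∈ A then paddedView n k v B s r i else 0 := by
  funext i
  by_cases hi : i ∈ A
  · simp [paddedView, hi, h hi]
  · simp [paddedView, hi]

/-- If the distribution of the shares of `B` does not depend on the secret, neither does
the expectation of any function of the joint view of `B`. -/
theorem sum_mul_paddedView_eq (n k : ℕ) {𝕊 R : Type*} [Fintype R] (p : R → ℝ)
    (v : Fin n → 𝕊 → R → (Fin k → ZMod 2)) (B : Finset (Fin n)) (s s' : 𝕊)
    (h : ∀ u : Fin n → (Fin k → ZMod 2),
      ∑ r ∈ Finset.univ.filter (fun r : R => ∀ i ∈ B, v i s r = u i), p r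
        = ∑ r ∈ Finset.univ.filter (fun r : R => ∀ i ∈ B, v i s' r = u i), p r)
    (G : (Fin n → Fin k → ZMod 2) → ℂ) :
    ∑ r : R, (p r : ℂ) * G (paddedView n k v B s r)
      = ∑ r : R, (p r : ℂ) * G (paddedView n k v B s' r) := by
  have fiber : ∀ t : 𝕊, ∑ r : R, (p r : ℂ) * G (paddedView n k v B t r)
      = ∑ u : Fin n → Fin k → ZMod 2,
        ((∑ r ∈ Finset.univ.filter (fun r : R => paddedView n k v B t r = u), p r : ℝ) : ℂ)
          * G u := by
    intro t
    rw [← Finset.sum_fiberwise (s := Finset.univ) (g := paddedView n k v B t)]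
    refine Finset.sum_congr rfl fun u _ => ?_
    rw [Complex.ofReal_sum, Finset.sum_mul]
    refine Finset.sum_congr rfl fun r hr => ?_
    rw [(Finset.mem_filter.mp hr).2]
  rw [fiber, fiber]
  refine Finset.sum_congr rfl fun u _ => ?_
  congr 2
  simp only [paddedView_eq_iff]
  by_cases hu : ∀ i ∉ B, u i = 0
  · simpa only [eq_true hu, and_true] using h u
  · simp only [hu, and_false, Finset.filter_false, Finset.sum_empty]

/-- Threshold corollary: a perfectly `2τ`-private secret sharing scheme remains
perfectly secure even when the adversary queries subsets of at most `τ` shares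
in superposition. -/
theorem threshold_secret_sharing_superposition_secure
    (n k τ : ℕ) {𝕊 R X : Type*} [Fintype R] [Fintype X] [DecidableEq X]
    (p : R → ℝ) (hp : ∀ r, 0 ≤ p r)
    (v : Fin n → 𝕊 → R → (Fin k → ZMod 2))
    (hpriv : ∀ B : Finset (Fin n), B.card ≤ 2 * τ → ∀ s s' : 𝕊,
      ∀ u : Fin n → (Fin k → ZMod 2),
      ∑ r ∈ Finset.univ.filter (fun r : R => ∀ i ∈ B, v i s r = u i), p r
        = ∑ r ∈ Finset.univ.filter (fun r : R => ∀ i ∈ B, v i s' r = u i), p r)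
    (α : X × Finset (Fin n) × (Fin n → Fin k → ZMod 2) → ℂ)
    (s s' : 𝕊) :
    ∑ r : R, (p r : ℂ) •
        Matrix.vecMulVec
          (advQueryState n k v (Finset.univ.filter (fun A : Finset (Fin n) => A.card ≤ τ)) α s r)
          (star (advQueryState n k v (Finset.univ.filter (fun A : Finset (Fin n) => A.card ≤ τ)) α s r))
      = ∑ r : R, (p r : ℂ) •
        Matrix.vecMulVec
          (advQueryState n k v (Finset.univ.filter (fun A : Finset (Fin n) => A.card ≤ τ)) α s' r)
          (star (advQueryState n k v (Finset.univ.filter (fun A : Finset (Fin n) => A.card ≤ τ)) α s' r)) := by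
  ext ⟨x, A, a⟩ ⟨y, C, c⟩
  simp only [Matrix.sum_apply, Matrix.smul_apply, Matrix.vecMulVec_apply, Pi.star_apply,
    advQueryState_apply, Finset.mem_filter, Finset.mem_univ, true_and, smul_eq_mul]
  by_cases hA : A.card ≤ τ
  · by_cases hC : C.card ≤ τ
    · have hcard : (A ∪ C).card ≤ 2 * τ := by
        have := Finset.card_union_le A C
        omega
      simp only [hA, hC, if_true, paddedView_of_subset n k v (Finset.subset_union_left : A ⊆ A ∪ C),
        paddedView_of_subset n k v (Finset.subset_union_right : C ⊆ A ∪ C)]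
      exact sum_mul_paddedView_eq n k p v (A ∪ C) s s' (hpriv (A ∪ C) hcard s s')
        fun w => α (x, A, a - fun i => if i ∈ A then w i else 0)
          * star (α (y, C, c - fun i => if i ∈ C then w i else 0))
    · simp [hC]
  · simp [hA]
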